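/- For every integer r ≥ 4 (equivalently, every odd degree d = 2r − 1 ≥ 7), there exists a line arrangement of 2r − 1 lines in the real projective plane which is maximal Tjurina of type (2r − 1, r). -/

import Mathlib

open Classical MvPolynomial

variable {K : Type*} [Field K] [CharZero K] {ℓ : ℕ}

/-- A (central) hyperplane arrangement: a finite set of nonzero linear forms,
pairwise non-proportional. -/
def IsArrangement (A : Finset (MvPolynomial (Fin ℓ) K)) : Prop :=
  (∀ α ∈ A, α ≠ 0 ∧ α.IsHomogeneous 1) ∧
    ∀ α ∈ A, ∀ β ∈ A, α ≠ β → ∀ c : K, α ≠ c • β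

/-- The arrangement is essential: the common zero set of its forms is `{0}`. -/
def IsEssential (A : Finset (MvPolynomial (Fin ℓ) K)) : Prop :=
  ∀ v : Fin ℓ → K, (∀ α ∈ A, eval v α = 0) → v = 0

/-- The defining polynomial `Q(A)`. -/
noncomputable def Qpoly (A : Finset (MvPolynomial (Fin ℓ) K)) : MvPolynomial (Fin ℓ) K :=
  ∏ α ∈ A, α

/-- Apply a derivation `θ = Σ θ_j ∂_j` to a polynomial. -/
noncomputable def applyDer (θ : Fin ℓ → MvPolynomial (Fin ℓ) K)
    (f : MvPolynomial (Fin ℓ) K) : MvPolynomial (Fin ℓ) K :=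
  ∑ j, θ j * pderiv j f

/-- The minimal degree of a Jacobian relation `r(A)`. -/
noncomputable def mdr (A : Finset (MvPolynomial (Fin ℓ) K)) : ℕ :=
  sInf {r | ∃ θ : Fin ℓ → MvPolynomial (Fin ℓ) K, θ ≠ 0 ∧
    (∀ j, (θ j).IsHomogeneous r) ∧ applyDer θ (Qpoly A) = 0}

/-- The number of elements `|A^H|` of the restriction of `A` to `H`:
the number of distinct subspaces `H ∩ ker α_L`, `L ∈ A \ {H}`. -/
noncomputable def restCard (A : Finset (MvPolynomial (Fin ℓ) K))
    (H : MvPolynomial (Fin ℓ) K) : ℕ :=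
  ((A.erase H).image fun L => {v : Fin ℓ → K | eval v H = 0 ∧ eval v L = 0}).card

/-- The number `n_j(A)` of intersection points of multiplicity `j` of a line
arrangement `A` in `P^2`. An intersection point is encoded (bijectively) by the set
of lines of `A` passing through it, which has at least two elements. -/
noncomputable def nPoints (A : Finset (MvPolynomial (Fin 3) K)) (j : ℕ) : ℕ :=
  Set.ncard {T : Finset (MvPolynomial (Fin 3) K) |
    ∃ v : Fin 3 → K, v ≠ 0 ∧ T = A.filter (fun α => eval v α = 0) ∧
      2 ≤ T.card ∧ T.card = j}

/-- The maximal multiplicity `m(A)` of an intersection point of `A`. -/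
noncomputable def maxMult (A : Finset (MvPolynomial (Fin 3) K)) : ℕ :=
  sSup {j | 2 ≤ j ∧ nPoints A j ≠ 0}

/-- The global Tjurina number `τ(A) = Σ_{j ≥ 2} n_j(A)·(j−1)²` of a line arrangement. -/
noncomputable def tjurina (A : Finset (MvPolynomial (Fin 3) K)) : ℕ :=
  ∑ j ∈ Finset.range (A.card + 1), nPoints A j * (j - 1) ^ 2

/-- `τ(d,r)_max = (d−1)(d−r−1) + r² − C(2r−d+2, 2)`, for `d/2 ≤ r ≤ d−1`. -/
def tauMax (d r : ℕ) : ℕ :=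
  (d - 1) * (d - r - 1) + r ^ 2 - Nat.choose (2 * r - d + 2) 2

/-- A line arrangement `A` is maximal Tjurina of type `(d, r)` if it consists of `d`
lines, `r(A) = r` and `τ(A) = τ(d,r)_max`. -/
def IsMaxTjurina (A : Finset (MvPolynomial (Fin 3) K)) (d r : ℕ) : Prop :=
  A.card = d ∧ mdr A = r ∧ tjurina A = tauMax d r


/-! ## Linear forms in three variables -/

/-- The linear form `a x + b y + c z`. -/
noncomputable def lf (a b c : ℝ) : MvPolynomial (Fin 3) ℝ :=
  C a * X 0 + C b * X 1 + C c * X 2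

lemma eval_lf (a b c : ℝ) (v : Fin 3 → ℝ) :
    eval v (lf a b c) = a * v 0 + b * v 1 + c * v 2 := by
  simp [lf]

lemma lf_inj {a b c a' b' c' : ℝ} (h : lf a b c = lf a' b' c') :
    a = a' ∧ b = b' ∧ c = c' := by
  have h0 := congrArg (eval ![1, 0, 0]) h
  have h1 := congrArg (eval ![0, 1, 0]) h
  have h2 := congrArg (eval ![0, 0, 1]) h
  simp [eval_lf] at h0 h1 h2
  exact ⟨h0, h1, h2⟩

lemma smul_lf (k a b c : ℝ) : k • lf a b c = lf (k * a) (k * b) (k * c) := by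
  simp [lf, smul_eq_C_mul]; ring

lemma lf_hom (a b c : ℝ) : (lf a b c).IsHomogeneous 1 := by
  unfold lf
  have h : ∀ (a : ℝ) (i : Fin 3), (C a * X i : MvPolynomial (Fin 3) ℝ).IsHomogeneous 1 := by
    intro a i
    simpa using (isHomogeneous_C (Fin 3) a).mul (isHomogeneous_X ℝ i)
  exact ((h a 0).add (h b 1)).add (h c 2)

lemma applyDer_lf (θ : Fin 3 → MvPolynomial (Fin 3) ℝ) (a b c : ℝ) :
    applyDer θ (lf a b c) = C a * θ 0 + C b * θ 1 + C c * θ 2 := by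
  simp [applyDer, lf, Fin.sum_univ_three, pderiv_X, Pi.single_apply]
  ring

lemma applyDer_mul (θ : Fin 3 → MvPolynomial (Fin 3) ℝ) (f g : MvPolynomial (Fin 3) ℝ) :
    applyDer θ (f * g) = applyDer θ f * g + f * applyDer θ g := by
  simp only [applyDer, Fin.sum_univ_three, Derivation.leibniz, smul_eq_mul]
  ring

/-! ## General facts on arrangements -/

lemma prime_of_deg_one {α : MvPolynomial (Fin 3) ℝ} (h0 : α ≠ 0) (h : α.IsHomogeneous 1) :
    Prime α := by
  apply Irreducible.prime
  apply irreducible_of_totalDegree_eq_one (h.totalDegree h0)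
  intro x hx
  obtain ⟨m, hm⟩ := MvPolynomial.ne_zero_iff.1 h0
  have h1 := hx m
  rw [isUnit_iff_ne_zero]
  rintro rfl
  exact hm (zero_dvd_iff.1 h1)

lemma not_dvd_of_arr {A : Finset (MvPolynomial (Fin 3) ℝ)} (hA : IsArrangement A)
    {α β : MvPolynomial (Fin 3) ℝ} (ha : α ∈ A) (hb : β ∈ A) (hne : α ≠ β) : ¬ α ∣ β := by
  rintro ⟨q, hq⟩
  have ha1 := hA.1 α ha
  have hb1 := hA.1 β hb
  have hq0 : q ≠ 0 := by
    rintro rfl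
    exact hb1.1 (by simpa using hq)
  have h1 := totalDegree_mul_of_isDomain ha1.1 hq0
  rw [← hq, hb1.2.totalDegree hb1.1, ha1.2.totalDegree ha1.1] at h1
  have h2 : q.totalDegree = 0 := by omega
  rw [totalDegree_eq_zero_iff_eq_C] at h2
  refine hA.2 β hb α ha hne.symm (coeff 0 q) ?_
  rw [hq, smul_eq_C_mul, ← h2, mul_comm]

lemma dvd_applyDer {A : Finset (MvPolynomial (Fin 3) ℝ)} (hA : IsArrangement A)
    {θ : Fin 3 → MvPolynomial (Fin 3) ℝ} (hθ : applyDer θ (Qpoly A) = 0)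
    {α : MvPolynomial (Fin 3) ℝ} (ha : α ∈ A) : α ∣ applyDer θ α := by
  have hp := prime_of_deg_one (hA.1 α ha).1 (hA.1 α ha).2
  rw [Qpoly, ← Finset.mul_prod_erase A (fun x => x) ha, applyDer_mul] at hθ
  have h1 : α ∣ applyDer θ α * ∏ x ∈ A.erase α, x :=
    ⟨- applyDer θ (∏ x ∈ A.erase α, x), by linear_combination hθ⟩
  rcases hp.dvd_or_dvd h1 with h | h
  · exact h
  · obtain ⟨β, hβ, hd⟩ := hp.exists_mem_finset_dvd h
    rw [Finset.mem_erase] at hβ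
    exact absurd hd (not_dvd_of_arr hA ha hβ.2 hβ.1.symm)

lemma prod_dvd_of_arr {A : Finset (MvPolynomial (Fin 3) ℝ)} (hA : IsArrangement A)
    {B : Finset (MvPolynomial (Fin 3) ℝ)} (hB : B ⊆ A) {w : MvPolynomial (Fin 3) ℝ}
    (h : ∀ α ∈ B, α ∣ w) : ∏ α ∈ B, α ∣ w := by
  apply Finset.prod_dvd_of_isRelPrime _ h
  intro α ha β hb hne
  have hp := prime_of_deg_one (hA.1 α (hB ha)).1 (hA.1 α (hB ha)).2
  exact (hp.irreducible.isRelPrime_iff_not_dvd).2 (not_dvd_of_arr hA (hB ha) (hB hb) hne)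

lemma prod_hom {A : Finset (MvPolynomial (Fin 3) ℝ)} (hA : IsArrangement A)
    {B : Finset (MvPolynomial (Fin 3) ℝ)} (hB : B ⊆ A) :
    (∏ α ∈ B, α).IsHomogeneous B.card ∧ (∏ α ∈ B, α) ≠ 0 := by
  constructor
  · have := IsHomogeneous.prod B (fun α => α) (fun _ => 1) (fun α ha => (hA.1 α (hB ha)).2)
    simpa using this
  · exact Finset.prod_ne_zero_iff.2 fun α ha => (hA.1 α (hB ha)).1

/-- A polynomial of degree at most one is affine. -/
lemma affine_of_deg_le_one {q : MvPolynomial (Fin 3) ℝ} (h : q.totalDegree ≤ 1) :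
    ∃ e a b c : ℝ, q = C e + lf a b c := by
  have h1 : q = homogeneousComponent 0 q + homogeneousComponent 1 q := by
    conv_lhs => rw [← sum_homogeneousComponent q]
    rw [Finset.sum_subset (Finset.range_subset_range.2 (Nat.succ_le_succ h))]
    · simp [Finset.sum_range_succ]
    · intro i _ hi
      apply homogeneousComponent_eq_zero
      simp at hi
      omega
  have h2 : homogeneousComponent 1 q ∈ homogeneousSubmodule (Fin 3) ℝ 1 :=
    homogeneousComponent_isHomogeneous 1 q
  rw [homogeneousSubmodule_one_eq_span_X, Submodule.mem_span_range_iff_exists_fun] at h2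
  obtain ⟨c, hc⟩ := h2
  refine ⟨coeff 0 q, c 0, c 1, c 2, ?_⟩
  rw [h1, ← hc]
  simp [lf, Fin.sum_univ_three, smul_eq_C_mul]

/-! ## The arrangement -/

/-- Index type of the lines. -/
abbrev Ix (n : ℕ) := Fin n ⊕ Fin n ⊕ Fin 3

/-- Coefficient of `x`. -/
noncomputable def ca (n : ℕ) : Ix n → ℝ :=
  Sum.elim (fun _ => 1) (Sum.elim (fun _ => 0) ![0, 1, -2])

/-- Coefficient of `y`. -/
noncomputable def cb (n : ℕ) : Ix n → ℝ :=
  Sum.elim (fun _ => 0) (Sum.elim (fun _ => 1) ![0, -2, 1])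

/-- Coefficient of `z`. -/
noncomputable def cc (n : ℕ) : Ix n → ℝ :=
  Sum.elim (fun i => -2 ^ (i.val + 1)) (Sum.elim (fun i => -2 ^ (i.val + 1)) ![1, 0, 0])

/-- The lines `x = 2^i z`, `y = 2^i z` (`1 ≤ i ≤ n`), `z = 0`, `x = 2y`, `y = 2x`. -/
noncomputable def FF (n : ℕ) (i : Ix n) : MvPolynomial (Fin 3) ℝ :=
  lf (ca n i) (cb n i) (cc n i)

/-- The arrangement. -/
noncomputable def Arr (n : ℕ) : Finset (MvPolynomial (Fin 3) ℝ) :=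
  Finset.univ.image (FF n)

lemma FF_nonprop (n : ℕ) (i j : Ix n) (hij : i ≠ j) (k : ℝ) : FF n i ≠ k • FF n j := by
  intro h
  rw [FF, FF, smul_lf] at h
  obtain ⟨h1, h2, h3⟩ := lf_inj h
  have key : ∀ m : ℕ, (2 : ℝ) ^ (m + 1) ≠ 0 := fun m => by positivity
  rcases i with i | i | i <;> rcases j with j | j | j <;> (try fin_cases i) <;>
    (try fin_cases j) <;> simp [ca, cb, cc] at h1 h2 h3 hij <;>
    first
    | (subst h1; simp at h3; exact hij (Fin.ext h3))
    | (subst h2; simp at h3; exact hij (Fin.ext h3))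
    | linarith
    | (rw [← h1] at h3; norm_num at h3)
    | (rw [← h2] at h3; norm_num at h3)

lemma FF_ne_zero (n : ℕ) (i : Ix n) : FF n i ≠ 0 := by
  intro h
  have h0 : FF n i = lf 0 0 0 := by simpa [lf] using h
  obtain ⟨h1, h2, h3⟩ := lf_inj h0
  rcases i with i | i | i <;> (try fin_cases i) <;> simp [ca, cb, cc] at h1 h2 h3

lemma FF_inj (n : ℕ) : Function.Injective (FF n) := by
  intro i j h
  by_contra hne
  exact FF_nonprop n i j hne 1 (by simpa using h)

lemma Arr_isArr (n : ℕ) : IsArrangement (Arr n) := by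
  constructor
  · intro α ha
    obtain ⟨i, -, rfl⟩ := Finset.mem_image.1 ha
    exact ⟨FF_ne_zero n i, lf_hom _ _ _⟩
  · intro α ha β hb hne c
    obtain ⟨i, -, rfl⟩ := Finset.mem_image.1 ha
    obtain ⟨j, -, rfl⟩ := Finset.mem_image.1 hb
    exact FF_nonprop n i j (fun h => hne (by rw [h])) c

lemma FF_mem (n : ℕ) (i : Ix n) : FF n i ∈ Arr n :=
  Finset.mem_image_of_mem _ (Finset.mem_univ i)

lemma eval_FF (n : ℕ) (i : Ix n) (v : Fin 3 → ℝ) :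
    eval v (FF n i) = ca n i * v 0 + cb n i * v 1 + cc n i * v 2 := eval_lf _ _ _ _

lemma Arr_essential (n : ℕ) (hn : 1 ≤ n) : IsEssential (Arr n) := by
  intro v hv
  have h0 := hv _ (FF_mem n (Sum.inr (Sum.inr 0)))
  have h1 := hv _ (FF_mem n (Sum.inl ⟨0, hn⟩))
  have h2 := hv _ (FF_mem n (Sum.inr (Sum.inl ⟨0, hn⟩)))
  simp [eval_FF, ca, cb, cc] at h0 h1 h2
  ext j
  fin_cases j <;> simp_all

lemma Arr_card (n : ℕ) : (Arr n).card = 2 * n + 3 := by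
  rw [Arr, Finset.card_image_of_injective _ (FF_inj n), Finset.card_univ]
  simp
  omega

/-! ## The minimal degree of a relation -/

/-- Indices of the lines through `(0:1:0)`. -/
noncomputable def Sg (n : ℕ) : Finset (Ix n) := Finset.univ.filter fun i => cb n i = 0

/-- Indices of the other lines. -/
noncomputable def Sh (n : ℕ) : Finset (Ix n) := Finset.univ.filter fun i => ¬ cb n i = 0

lemma Sg_card (n : ℕ) : (Sg n).card = n + 1 := by
  rw [Sg, Finset.card_filter, Fintype.sum_sum_type, Fintype.sum_sum_type]
  simp [cb, Fin.sum_univ_three]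

lemma Sh_card (n : ℕ) : (Sh n).card = n + 2 := by
  rw [Sh, Finset.card_filter, Fintype.sum_sum_type, Fintype.sum_sum_type]
  simp [cb, Fin.sum_univ_three]

lemma Q_eq (n : ℕ) : Qpoly (Arr n) = (∏ i ∈ Sg n, FF n i) * ∏ i ∈ Sh n, FF n i := by
  rw [Qpoly, Arr, Finset.prod_image fun i _ j _ h => FF_inj n h, Sg, Sh,
    Finset.prod_filter_mul_prod_filter_not]

lemma prodFF_hom (n : ℕ) (s : Finset (Ix n)) :
    (∏ i ∈ s, FF n i).IsHomogeneous s.card ∧ (∏ i ∈ s, FF n i) ≠ 0 := by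
  have h := prod_hom (Arr_isArr n) (B := s.image (FF n))
    (Finset.image_subset_image (Finset.subset_univ s))
  rwa [Finset.prod_image fun i _ j _ h => FF_inj n h,
    Finset.card_image_of_injective _ (FF_inj n)] at h

lemma prodFF_dvd (n : ℕ) (s : Finset (Ix n)) (w : MvPolynomial (Fin 3) ℝ)
    (hw : ∀ i ∈ s, FF n i ∣ w) : ∏ i ∈ s, FF n i ∣ w := by
  have h := prod_dvd_of_arr (Arr_isArr n) (B := s.image (FF n))
    (Finset.image_subset_image (Finset.subset_univ s)) (w := w) (Finset.forall_mem_image.2 hw)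
  rwa [Finset.prod_image fun i _ j _ h => FF_inj n h] at h

lemma Q_hom (n : ℕ) : (Qpoly (Arr n)).IsHomogeneous (2 * n + 3) ∧ Qpoly (Arr n) ≠ 0 := by
  have := prod_hom (Arr_isArr n) (Finset.Subset.refl (Arr n))
  rwa [Arr_card] at this

lemma euler3 {f : MvPolynomial (Fin 3) ℝ} {d : ℕ} (h : f.IsHomogeneous d) :
    X 0 * pderiv 0 f + X 1 * pderiv 1 f + X 2 * pderiv 2 f = C (d : ℝ) * f := by
  have := h.sum_X_mul_pderiv
  rw [Fin.sum_univ_three] at this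
  rw [this, nsmul_eq_mul]
  simp

lemma exists_rel (n : ℕ) : ∃ θ : Fin 3 → MvPolynomial (Fin 3) ℝ, θ ≠ 0 ∧
    (∀ j, (θ j).IsHomogeneous (n + 2)) ∧ applyDer θ (Qpoly (Arr n)) = 0 := by
  obtain ⟨hh, hh0⟩ := prodFF_hom n (Sh n)
  rw [Sh_card] at hh
  have hg : pderiv 1 (∏ i ∈ Sg n, FF n i) = 0 := by
    refine Finset.prod_induction _ (fun p => pderiv 1 p = 0) ?_ ?_ ?_
    · intro a b ha hb
      rw [Derivation.leibniz, ha, hb]; simp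
    · simp
    · intro i hi
      have : cb n i = 0 := by simpa [Sg] using hi
      simp [FF, lf, this, pderiv_X, Pi.single_apply]
  have hQ := Q_eq n
  have hE := euler3 (Q_hom n).1
  set h := ∏ i ∈ Sh n, FF n i with hdef
  set g := ∏ i ∈ Sg n, FF n i with gdef
  have hQ1 : pderiv 1 (Qpoly (Arr n)) = g * pderiv 1 h := by
    rw [hQ, Derivation.leibniz, hg]; simp
  have hy : (pderiv 1 h).IsHomogeneous (n + 1) := hh.pderiv
  have hx : ∀ j, (pderiv 1 h * X j).IsHomogeneous (n + 2) := fun j => hy.mul (isHomogeneous_X ℝ j)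
  refine ⟨![pderiv 1 h * X 0, pderiv 1 h * X 1 - C ((2 * n + 3 : ℕ) : ℝ) * h,
    pderiv 1 h * X 2], ?_, ?_, ?_⟩
  · intro h0
    have e0 := congrFun h0 0
    have e1 := congrFun h0 1
    simp only [Matrix.cons_val, Pi.zero_apply] at e0 e1
    rw [(mul_eq_zero.1 e0).resolve_right (X_ne_zero 0), zero_mul, zero_sub, neg_eq_zero] at e1
    have e2 := (mul_eq_zero.1 e1).resolve_right hh0
    rw [C_eq_zero] at e2
    have : 2 * n + 3 = 0 := by exact_mod_cast e2
    omega
  · intro j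
    fin_cases j
    · exact hx 0
    · refine (hx 1).sub ?_
      simpa using (isHomogeneous_C (Fin 3) ((2 * n + 3 : ℕ) : ℝ)).mul hh
    · exact hx 2
  · simp only [applyDer, Fin.sum_univ_three, Matrix.cons_val_zero, Matrix.cons_val_one,
      Matrix.cons_val]
    linear_combination (pderiv 1 h) * hE - C ((2 * n + 3 : ℕ) : ℝ) * h * hQ1 +
      (pderiv 1 h) * C ((2 * n + 3 : ℕ) : ℝ) * hQ

lemma dvd_of_C_mul {α w : MvPolynomial (Fin 3) ℝ} {a : ℝ} (ha : a ≠ 0) (h : α ∣ C a * w) :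
    α ∣ w := by
  have : w = C a⁻¹ * (C a * w) := by
    rw [← mul_assoc, ← C_mul, inv_mul_cancel₀ ha]; simp
  rw [this]
  exact h.mul_left _

lemma no_rel (n : ℕ) (hn : 1 ≤ n) (k : ℕ) (hk : k < n + 2)
    (θ : Fin 3 → MvPolynomial (Fin 3) ℝ) (hom : ∀ j, (θ j).IsHomogeneous k)
    (hθ : applyDer θ (Qpoly (Arr n)) = 0) : θ = 0 := by
  have hd : ∀ i, FF n i ∣ C (ca n i) * θ 0 + C (cb n i) * θ 1 + C (cc n i) * θ 2 := by
    intro i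
    have := dvd_applyDer (Arr_isArr n) hθ (FF_mem n i)
    rwa [FF, applyDer_lf] at this
  have hv : ∀ i (v : Fin 3 → ℝ), ca n i * v 0 + cb n i * v 1 + cc n i * v 2 = 0 →
      ca n i * eval v (θ 0) + cb n i * eval v (θ 1) + cc n i * eval v (θ 2) = 0 := by
    intro i v h
    obtain ⟨q, hq⟩ := hd i
    have := congrArg (eval v) hq
    rw [map_mul, eval_FF, h] at this
    simpa using this
  set W : MvPolynomial (Fin 3) ℝ := X 2 * θ 0 - X 0 * θ 2 with hWdef
  -- the pencil divides `W`
  have hgW : ∏ i ∈ Sg n, FF n i ∣ W := by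
    apply prodFF_dvd
    intro i hi
    have hb : cb n i = 0 := by simpa [Sg] using hi
    have hdi := hd i
    have hac : ca n i ≠ 0 ∨ cc n i ≠ 0 := by
      by_contra hcon
      push Not at hcon
      exact FF_ne_zero n i (by simp [FF, lf, hcon.1, hcon.2, hb])
    rw [hb] at hdi
    obtain ⟨q, hq⟩ := hdi
    have hF : FF n i = C (ca n i) * X 0 + C (cc n i) * X 2 := by simp [FF, lf, hb]
    rw [hF] at hq ⊢
    simp only [map_zero, zero_mul, add_zero] at hq
    rcases hac with h | h
    · apply dvd_of_C_mul h
      exact ⟨X 2 * q - θ 2, by rw [hWdef]; linear_combination X 2 * hq⟩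
    · apply dvd_of_C_mul h
      exact ⟨θ 0 - X 0 * q, by rw [hWdef]; linear_combination - X 0 * hq⟩
  have hW1 : W.IsHomogeneous (k + 1) := by
    have := ((isHomogeneous_X ℝ (2 : Fin 3)).mul (hom 0)).sub
      ((isHomogeneous_X ℝ (0 : Fin 3)).mul (hom 2))
    rwa [add_comm 1 k] at this
  have hW0 : W = 0 := by
    obtain ⟨q, hq⟩ := hgW
    obtain ⟨hg, hg0⟩ := prodFF_hom n (Sg n)
    rw [Sg_card] at hg
    suffices hq0 : q = 0 by rw [hq, hq0, mul_zero]
    by_contra hq0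
    have hdeg : q.totalDegree ≤ 1 := by
      have h1 := totalDegree_mul_of_isDomain hg0 hq0
      rw [← hq, hg.totalDegree hg0] at h1
      have := hW1.totalDegree_le
      omega
    obtain ⟨e, a, b, c, rfl⟩ := affine_of_deg_le_one hdeg
    have hz : ∀ v : Fin 3 → ℝ, v 2 ≠ 0 → (∀ m : ℕ, 1 ≤ m → m ≤ n → v 0 ≠ 2 ^ m * v 2) →
        eval v W = 0 → e + (a * v 0 + b * v 1 + c * v 2) = 0 := by
      intro v h2 hm hWv
      rw [hq, map_mul, map_add, eval_C, eval_lf] at hWv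
      refine (mul_eq_zero.1 hWv).resolve_left ?_
      rw [map_prod]
      refine Finset.prod_ne_zero_iff.2 ?_
      intro i hi
      have hb : cb n i = 0 := by simpa [Sg] using hi
      rw [eval_FF]
      rcases i with i | i | i
      · simp [ca, cb, cc]
        have := hm (i.val + 1) (by omega) (by omega)
        intro h
        apply this
        linarith
      · simp [cb] at hb
      · fin_cases i <;> simp [ca, cb, cc] at hb ⊢
        exact h2
    have hWe : ∀ v : Fin 3 → ℝ, eval v W = v 2 * eval v (θ 0) - v 0 * eval v (θ 2) := by
      intro v; simp [hWdef]
    have l1 := hv (Sum.inr (Sum.inr 1))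
    have l2 := hv (Sum.inr (Sum.inr 2))
    have l3 := hv (Sum.inr (Sum.inl ⟨0, hn⟩))
    have l4 := hv (Sum.inr (Sum.inl ⟨n - 1, by omega⟩))
    have hn1 : n - 1 + 1 = n := by omega
    simp only [ca, cb, cc, Sum.elim_inr, Sum.elim_inl, Matrix.cons_val, hn1, zero_add] at l1 l2 l3 l4
    have hN : (0 : ℝ) < 2 ^ n := by positivity
    set N : ℝ := 2 ^ n with hNdef
    have P1 : ∀ t : ℝ, t ≠ 0 → e + (a * 0 + b * 0 + c * t) = 0 := by
      intro t ht
      have a1 := l1 ![0, 0, t] (by simp)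
      have a2 := l2 ![0, 0, t] (by simp)
      have := hz ![0, 0, t] (by simpa using ht) (by
        intro m _ _ h
        simp at h
        exact ht h) (by
        rw [hWe]; simp
        right; linarith)
      simpa using this
    have P2 : ∀ t : ℝ, t ≠ 0 → e + (a * t + b * (2 * t) + c * t) = 0 := by
      intro t ht
      have a1 := l2 ![t, 2 * t, t] (by simp)
      have a2 := l3 ![t, 2 * t, t] (by simp)
      have := hz ![t, 2 * t, t] (by simpa using ht) (by
        intro m h1 _ h
        simp only [Matrix.cons_val] at h
        have h3 : ((2 : ℝ) ^ m - 1) * t = 0 := by linarith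
        have h4 : (1 : ℝ) < 2 ^ m := one_lt_pow₀ (by norm_num) (by omega)
        rcases mul_eq_zero.1 h3 with h | h
        · linarith
        · exact ht h) (by
        rw [hWe]; simp
        rw [← mul_sub]
        have : eval ![t, 2 * t, t] (θ 0) - eval ![t, 2 * t, t] (θ 2) = 0 := by linarith
        rw [this, mul_zero])
      simpa using this
    have P3 : ∀ t : ℝ, t ≠ 0 → e + (a * (2 * N * t) + b * (N * t) + c * t) = 0 := by
      intro t ht
      have a1 := l1 ![2 * N * t, N * t, t] (by simp; ring)
      have a2 := l4 ![2 * N * t, N * t, t] (by simp)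
      have := hz ![2 * N * t, N * t, t] (by simpa using ht) (by
        intro m _ hm h
        simp at h
        rcases h with h | h
        · have : (2 : ℝ) ^ m ≤ N := pow_le_pow_right₀ (by norm_num) hm
          linarith
        · exact ht h) (by
        rw [hWe]; simp
        linear_combination t * a1 + 2 * t * a2)
      simpa using this
    have p11 := P1 1 one_ne_zero
    have p12 := P1 2 two_ne_zero
    have p2 := P2 1 one_ne_zero
    have p3 := P3 1 one_ne_zero
    have c0 : c = 0 := by linarith
    have e0 : e = 0 := by linarith
    have hab : a = -2 * b := by linarith
    have hb0 : b = 0 := by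
      have : b * N = 0 := by
        rw [c0, e0, hab] at p3
        linarith
      exact (mul_eq_zero.1 this).resolve_right hN.ne'
    have ha0 : a = 0 := by rw [hab, hb0]; ring
    apply hq0
    simp [c0, e0, hb0, ha0, lf]
  -- now `θ` is an Euler multiple in the first and third coordinates
  have hx : (X 0 : MvPolynomial (Fin 3) ℝ) ∣ θ 0 := by
    have h1 : (X 0 : MvPolynomial (Fin 3) ℝ) ∣ X 2 * θ 0 :=
      ⟨θ 2, by rw [hWdef] at hW0; linear_combination hW0⟩
    refine (((X_prime (R := ℝ) (i := (0 : Fin 3)))).dvd_or_dvd h1).resolve_left ?_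
    rw [X_dvd_X]
    simp
  obtain ⟨s, hs⟩ := hx
  have hs2 : θ 2 = X 2 * s := by
    have h1 : X 0 * (θ 2 - X 2 * s) = 0 := by
      rw [hWdef, hs] at hW0
      linear_combination - hW0
    have := (mul_eq_zero.1 h1).resolve_left (X_ne_zero 0)
    linear_combination this
  have hu : θ 1 - X 1 * s = 0 := by
    have hdv : ∏ i ∈ Sh n, FF n i ∣ θ 1 - X 1 * s := by
      apply prodFF_dvd
      intro i hi
      have hb : cb n i ≠ 0 := by simpa [Sh] using hi
      obtain ⟨q, hq⟩ := hd i
      apply dvd_of_C_mul hb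
      refine ⟨q - s, ?_⟩
      rw [hs, hs2] at hq
      rw [FF, lf] at hq ⊢
      linear_combination hq
    by_contra hne
    obtain ⟨q, hq⟩ := hdv
    obtain ⟨hh, hh0⟩ := prodFF_hom n (Sh n)
    rw [Sh_card] at hh
    have hq0 : q ≠ 0 := by
      rintro rfl
      exact hne (by rw [hq, mul_zero])
    have h1 := totalDegree_mul_of_isDomain hh0 hq0
    rw [← hq, hh.totalDegree hh0] at h1
    have h2 : (X 1 * s).totalDegree ≤ k := by
      by_cases hs0 : s = 0
      · simp [hs0]
      · have h3 := totalDegree_mul_of_isDomain (X_ne_zero (R := ℝ) (0 : Fin 3)) hs0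
        have h4 := totalDegree_mul_of_isDomain (X_ne_zero (R := ℝ) (1 : Fin 3)) hs0
        rw [← hs] at h3
        rw [totalDegree_X] at h3 h4
        have := (hom 0).totalDegree_le
        omega
    have h5 := totalDegree_sub (θ 1) (X 1 * s)
    have h6 := (hom 1).totalDegree_le
    have h7 := max_le h6 h2
    omega
  have hs1 : θ 1 = X 1 * s := by linear_combination hu
  have hE := euler3 (Q_hom n).1
  have hs0 : s = 0 := by
    simp only [applyDer, Fin.sum_univ_three, hs, hs1, hs2] at hθ
    have h1 : s * (C ((2 * n + 3 : ℕ) : ℝ) * Qpoly (Arr n)) = 0 := by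
      linear_combination hθ - s * hE
    refine (mul_eq_zero.1 h1).resolve_right (mul_ne_zero ?_ (Q_hom n).2)
    rw [Ne, C_eq_zero]
    positivity
  ext1 j
  fin_cases j
  · simpa [hs0] using hs
  · simpa [hs0] using hs1
  · simpa [hs0] using hs2

lemma mdr_Arr (n : ℕ) (hn : 1 ≤ n) : mdr (Arr n) = n + 2 := by
  apply le_antisymm
  · exact Nat.sInf_le (exists_rel n)
  · refine le_csInf ⟨_, exists_rel n⟩ ?_
    rintro k ⟨θ, h0, hom, hθ⟩
    by_contra hk
    exact h0 (no_rel n hn k (by omega) θ hom hθ)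

/-! ## Intersection points and the Tjurina number -/

/-- The set of lines through `v`. -/
noncomputable def Tv (n : ℕ) (v : Fin 3 → ℝ) : Finset (MvPolynomial (Fin 3) ℝ) :=
  (Arr n).filter fun α => eval v α = 0

lemma FF_mem_Tv (n : ℕ) (v : Fin 3 → ℝ) (i : Ix n) :
    FF n i ∈ Tv n v ↔ ca n i * v 0 + cb n i * v 1 + cc n i * v 2 = 0 := by
  rw [Tv, Finset.mem_filter, eval_FF]
  exact and_iff_right (FF_mem n i)

lemma Tv_card (n : ℕ) (v : Fin 3 → ℝ) : (Tv n v).card =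
    (∑ i : Fin n, if v 0 = 2 ^ (i.val + 1) * v 2 then 1 else 0) +
    ((∑ i : Fin n, if v 1 = 2 ^ (i.val + 1) * v 2 then 1 else 0) +
    ((if v 2 = 0 then 1 else 0) + (if v 0 = 2 * v 1 then 1 else 0) +
    (if v 1 = 2 * v 0 then 1 else 0))) := by
  rw [Tv, Arr, Finset.filter_image, Finset.card_image_of_injective _ (FF_inj n),
    Finset.card_filter, Fintype.sum_sum_type, Fintype.sum_sum_type, Fin.sum_univ_three]
  simp only [eval_FF, ca, cb, cc, Sum.elim_inl, Sum.elim_inr, Matrix.cons_val]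
  congr 1
  · refine Finset.sum_congr rfl fun i _ => if_congr ?_ rfl rfl
    constructor <;> intro h <;> linarith
  · congr 1
    · refine Finset.sum_congr rfl fun i _ => if_congr ?_ rfl rfl
      constructor <;> intro h <;> linarith
    · congr 1
      · congr 1
        · refine if_congr ?_ rfl rfl
          constructor <;> intro h <;> linarith
        · refine if_congr ?_ rfl rfl
          constructor <;> intro h <;> linarith
      · refine if_congr ?_ rfl rfl
        constructor <;> intro h <;> linarith

/-- Index type of the points. -/
abbrev Jx := (ℕ × ℕ) ⊕ Fin 5

/-- The candidate intersection points. -/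
noncomputable def pt : Jx → Fin 3 → ℝ :=
  Sum.elim (fun p => ![2 ^ p.1, 2 ^ p.2, 1])
    ![![0, 0, 1], ![1, 0, 0], ![0, 1, 0], ![2, 1, 0], ![1, 2, 0]]

/-- Exponents of the four double points outside the grid. -/
def extra (n : ℕ) : Finset (ℕ × ℕ) := {(1, 0), (0, 1), (n + 1, n), (n, n + 1)}

/-- Exponents of the grid. -/
def grid (n : ℕ) : Finset (ℕ × ℕ) := Finset.Icc 1 n ×ˢ Finset.Icc 1 n

/-- The index set of the intersection points. -/
def PP (n : ℕ) : Finset Jx := (grid n ∪ extra n).disjSum Finset.univ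

/-- The multiplicity of the intersection points. -/
def mult (n : ℕ) : Jx → ℕ :=
  Sum.elim (fun p => (if 1 ≤ p.1 ∧ p.1 ≤ n then 1 else 0) + (if 1 ≤ p.2 ∧ p.2 ≤ n then 1 else 0) +
    (if p.1 = p.2 + 1 then 1 else 0) + (if p.2 = p.1 + 1 then 1 else 0)) ![2, n + 1, n + 1, 2, 2]

lemma two_pow_eq (a b : ℕ) : ((2 : ℝ) ^ a = 2 ^ b) ↔ a = b :=
  pow_right_inj₀ (by norm_num) (by norm_num)

lemma sum_fin_eq (n a : ℕ) : (∑ i : Fin n, if a = i.val + 1 then 1 else 0) =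
    if 1 ≤ a ∧ a ≤ n then 1 else 0 := by
  rw [Fin.sum_univ_eq_sum_range (fun i => if a = i + 1 then 1 else 0) n]
  split_ifs with h
  · rw [Finset.sum_eq_single (a - 1)]
    · rw [if_pos (by omega)]
    · intro b _ hb
      rw [if_neg (by omega)]
    · intro hb
      simp at hb
      omega
  · refine Finset.sum_eq_zero fun i hi => ?_
    simp at hi
    rw [if_neg (by omega)]

lemma card_pt (n : ℕ) (P : Jx) : (Tv n (pt P)).card = mult n P := by
  rw [Tv_card]
  rcases P with ⟨a, b⟩ | k
  · have e1 : ((2 : ℝ) ^ a = 2 * 2 ^ b) ↔ a = b + 1 := by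
      rw [← pow_succ', two_pow_eq]
    have e2 : ((2 : ℝ) ^ b = 2 * 2 ^ a) ↔ b = a + 1 := by
      rw [← pow_succ', two_pow_eq]
    simp only [pt, mult, Sum.elim_inl, Matrix.cons_val, mul_one, two_pow_eq, e1, e2, sum_fin_eq,
      one_ne_zero, if_false]
    omega
  · have e0 : ∀ m : ℕ, ¬ ((0 : ℝ) = 2 ^ m) := fun m => (by positivity : (2 : ℝ) ^ m ≠ 0).symm
    fin_cases k <;> simp [pt, mult, e0] <;> norm_num

lemma mem_PP_inl (n a b : ℕ) : (Sum.inl (a, b) : Jx) ∈ PP n ↔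
    ((1 ≤ a ∧ a ≤ n) ∧ (1 ≤ b ∧ b ≤ n)) ∨ (a = 1 ∧ b = 0) ∨ (a = 0 ∧ b = 1) ∨
    (a = n + 1 ∧ b = n) ∨ (a = n ∧ b = n + 1) := by
  simp [PP, grid, extra]
  tauto

lemma mem_PP_inr (n : ℕ) (k : Fin 5) : (Sum.inr k : Jx) ∈ PP n := by
  simp [PP]

lemma two_le_mult (n : ℕ) (hn : 1 ≤ n) (P : Jx) (hP : P ∈ PP n) : 2 ≤ mult n P := by
  rcases P with ⟨a, b⟩ | k
  · rw [mem_PP_inl] at hP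
    simp only [mult, Sum.elim_inl]
    split_ifs <;> omega
  · fin_cases k <;> simp [mult] <;> omega

lemma two_lines (n : ℕ) (v : Fin 3 → ℝ) (h : 2 ≤ (Tv n v).card) :
    ∃ i j : Ix n, i ≠ j ∧ FF n i ∈ Tv n v ∧ FF n j ∈ Tv n v := by
  obtain ⟨α, ha, β, hb, hne⟩ := Finset.one_lt_card.1 h
  obtain ⟨i, -, rfl⟩ := Finset.mem_image.1 (Finset.mem_filter.1 ha).1
  obtain ⟨j, -, rfl⟩ := Finset.mem_image.1 (Finset.mem_filter.1 hb).1
  exact ⟨i, j, fun h => hne (by rw [h]), ha, hb⟩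

lemma Tv_smul (n : ℕ) (v : Fin 3 → ℝ) (t : ℝ) (ht : t ≠ 0) : Tv n (t • v) = Tv n v := by
  ext α
  simp only [Tv, Finset.mem_filter]
  refine and_congr_right fun ha => ?_
  obtain ⟨i, -, rfl⟩ := Finset.mem_image.1 ha
  rw [eval_FF, eval_FF]
  simp only [Pi.smul_apply, smul_eq_mul]
  have : ca n i * (t * v 0) + cb n i * (t * v 1) + cc n i * (t * v 2) =
    t * (ca n i * v 0 + cb n i * v 1 + cc n i * v 2) := by ring
  rw [this, mul_eq_zero, or_iff_right ht]

lemma v_eta (v w : Fin 3 → ℝ) (h0 : v 0 = w 0) (h1 : v 1 = w 1) (h2 : v 2 = w 2) : v = w := by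
  ext j
  fin_cases j <;> assumption

lemma exists_pt (n : ℕ) (v : Fin 3 → ℝ) (hv : v ≠ 0) (h : 2 ≤ (Tv n v).card) :
    ∃ P ∈ PP n, ∃ t : ℝ, t ≠ 0 ∧ v = t • pt P := by
  obtain ⟨i, j, hne, hi, hj⟩ := two_lines n v h
  rw [FF_mem_Tv] at hi hj
  have hnz : ¬ (v 0 = 0 ∧ v 1 = 0 ∧ v 2 = 0) := by
    rintro ⟨h0, h1, h2⟩
    exact hv (v_eta _ _ h0 h1 h2)
  generalize hx : v 0 = x at *
  generalize hy : v 1 = y at *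
  generalize hz : v 2 = z at *
  have f1 : z = 0 → x = 0 → ∃ P ∈ PP n, ∃ t : ℝ, t ≠ 0 ∧ v = t • pt P := fun h1 h2 =>
    ⟨Sum.inr 2, mem_PP_inr _ _, y, fun h3 => hnz ⟨h2, h3, h1⟩,
      v_eta _ _ (by simp [pt, *]) (by simp [pt, *]) (by simp [pt, *])⟩
  have f2 : z = 0 → y = 0 → ∃ P ∈ PP n, ∃ t : ℝ, t ≠ 0 ∧ v = t • pt P := fun h1 h2 =>
    ⟨Sum.inr 1, mem_PP_inr _ _, x, fun h3 => hnz ⟨h3, h2, h1⟩,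
      v_eta _ _ (by simp [pt, *]) (by simp [pt, *]) (by simp [pt, *])⟩
  have f3 : z = 0 → x = 2 * y → ∃ P ∈ PP n, ∃ t : ℝ, t ≠ 0 ∧ v = t • pt P := fun h1 h2 =>
    ⟨Sum.inr 3, mem_PP_inr _ _, y, fun h3 => hnz ⟨by rw [h2, h3]; simp, h3, h1⟩,
      v_eta _ _ (by simp [pt, hx, h2, mul_comm]) (by simp [pt, hy]) (by simp [pt, hz, h1])⟩
  have f4 : z = 0 → y = 2 * x → ∃ P ∈ PP n, ∃ t : ℝ, t ≠ 0 ∧ v = t • pt P := fun h1 h2 =>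
    ⟨Sum.inr 4, mem_PP_inr _ _, x, fun h3 => hnz ⟨h3, by rw [h2, h3]; simp, h1⟩,
      v_eta _ _ (by simp [pt, hx]) (by simp [pt, hy, h2, mul_comm]) (by simp [pt, hz, h1])⟩
  have f5 : x = 2 * y → y = 2 * x → ∃ P ∈ PP n, ∃ t : ℝ, t ≠ 0 ∧ v = t • pt P := fun h1 h2 => by
    have hx0 : x = 0 := by linarith
    have hy0 : y = 0 := by linarith
    exact ⟨Sum.inr 0, mem_PP_inr _ _, z, fun h3 => hnz ⟨hx0, hy0, h3⟩,
      v_eta _ _ (by simp [pt, hx, hx0]) (by simp [pt, hy, hy0]) (by simp [pt, hz])⟩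
  have f6 : ∀ a b : ℕ, (Sum.inl (a, b) : Jx) ∈ PP n → x = 2 ^ a * z → y = 2 ^ b * z →
      ∃ P ∈ PP n, ∃ t : ℝ, t ≠ 0 ∧ v = t • pt P := fun a b hab h1 h2 =>
    ⟨Sum.inl (a, b), hab, z, fun h3 => hnz ⟨by rw [h1, h3]; simp, by rw [h2, h3]; simp, h3⟩,
      v_eta _ _ (by simp [pt, hx, h1, mul_comm]) (by simp [pt, hy, h2, mul_comm])
        (by simp [pt, hz])⟩
  have f7 : ∀ a b : ℕ, a ≠ b → ∀ w : ℝ, w = 2 ^ a * z → w = 2 ^ b * z → z = 0 ∧ w = 0 := by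
    intro a b hab w h1 h2
    have h3 : ((2 : ℝ) ^ a - 2 ^ b) * z = 0 := by linarith
    have h4 : (2 : ℝ) ^ a - 2 ^ b ≠ 0 := by
      rw [Ne, sub_eq_zero, two_pow_eq]
      exact hab
    have h5 := (mul_eq_zero.1 h3).resolve_left h4
    exact ⟨h5, by rw [h1, h5, mul_zero]⟩
  -- the two lines, as equations
  have key : ∀ i : Ix n, ca n i * x + cb n i * y + cc n i * z = 0 →
      (∃ a : Fin n, i = Sum.inl a ∧ x = 2 ^ (a.val + 1) * z) ∨
      (∃ a : Fin n, i = Sum.inr (Sum.inl a) ∧ y = 2 ^ (a.val + 1) * z) ∨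
      (i = Sum.inr (Sum.inr 0) ∧ z = 0) ∨ (i = Sum.inr (Sum.inr 1) ∧ x = 2 * y) ∨
      (i = Sum.inr (Sum.inr 2) ∧ y = 2 * x) := by
    intro i hi
    rcases i with a | a | k
    · left
      refine ⟨a, rfl, ?_⟩
      simp [ca, cb, cc] at hi
      linarith
    · right; left
      refine ⟨a, rfl, ?_⟩
      simp [ca, cb, cc] at hi
      linarith
    · right; right
      fin_cases k
      · left
        refine ⟨rfl, ?_⟩
        simpa [ca, cb, cc] using hi
      · right; left
        refine ⟨rfl, ?_⟩
        simp [ca, cb, cc] at hi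
        linarith
      · right; right
        refine ⟨rfl, ?_⟩
        simp [ca, cb, cc] at hi
        linarith
  have g1 : ∀ a : Fin n, x = 2 ^ (a.val + 1) * z → x = 2 * y →
      ∃ P ∈ PP n, ∃ t : ℝ, t ≠ 0 ∧ v = t • pt P := fun a h1 h2 =>
    f6 (a.val + 1) a.val ((mem_PP_inl _ _ _).2 (by omega)) h1 (by rw [pow_succ] at h1; linarith)
  have g2 : ∀ a : Fin n, x = 2 ^ (a.val + 1) * z → y = 2 * x →
      ∃ P ∈ PP n, ∃ t : ℝ, t ≠ 0 ∧ v = t • pt P := fun a h1 h2 =>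
    f6 (a.val + 1) (a.val + 2) ((mem_PP_inl _ _ _).2 (by omega)) h1
      (by rw [h2, h1, pow_succ _ (a.val + 1)]; ring)
  have g3 : ∀ a : Fin n, y = 2 ^ (a.val + 1) * z → y = 2 * x →
      ∃ P ∈ PP n, ∃ t : ℝ, t ≠ 0 ∧ v = t • pt P := fun a h1 h2 =>
    f6 a.val (a.val + 1) ((mem_PP_inl _ _ _).2 (by omega)) (by rw [pow_succ] at h1; linarith) h1
  have g4 : ∀ a : Fin n, y = 2 ^ (a.val + 1) * z → x = 2 * y →
      ∃ P ∈ PP n, ∃ t : ℝ, t ≠ 0 ∧ v = t • pt P := fun a h1 h2 =>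
    f6 (a.val + 2) (a.val + 1) ((mem_PP_inl _ _ _).2 (by omega))
      (by rw [h2, h1, pow_succ _ (a.val + 1)]; ring) h1
  have g5 : ∀ a b : Fin n, x = 2 ^ (a.val + 1) * z → y = 2 ^ (b.val + 1) * z →
      ∃ P ∈ PP n, ∃ t : ℝ, t ≠ 0 ∧ v = t • pt P := fun a b h1 h2 =>
    f6 (a.val + 1) (b.val + 1) ((mem_PP_inl _ _ _).2 (by omega)) h1 h2
  have g6 : ∀ a : Fin n, x = 2 ^ (a.val + 1) * z → z = 0 →
      ∃ P ∈ PP n, ∃ t : ℝ, t ≠ 0 ∧ v = t • pt P := fun a h1 h2 =>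
    f1 h2 (by rw [h1, h2, mul_zero])
  have g7 : ∀ a : Fin n, y = 2 ^ (a.val + 1) * z → z = 0 →
      ∃ P ∈ PP n, ∃ t : ℝ, t ≠ 0 ∧ v = t • pt P := fun a h1 h2 =>
    f2 h2 (by rw [h1, h2, mul_zero])
  rcases key i hi with ⟨a, rfl, e1⟩ | ⟨a, rfl, e1⟩ | ⟨rfl, e1⟩ | ⟨rfl, e1⟩ | ⟨rfl, e1⟩
  · rcases key j hj with ⟨b, rfl, e2⟩ | ⟨b, rfl, e2⟩ | ⟨rfl, e2⟩ | ⟨rfl, e2⟩ | ⟨rfl, e2⟩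
    · have hab : a.val + 1 ≠ b.val + 1 := fun h => hne (by rw [Fin.ext (Nat.succ_injective h)])
      obtain ⟨h1, h2⟩ := f7 _ _ hab x e1 e2
      exact f1 h1 h2
    · exact g5 a b e1 e2
    · exact g6 a e1 e2
    · exact g1 a e1 e2
    · exact g2 a e1 e2
  · rcases key j hj with ⟨b, rfl, e2⟩ | ⟨b, rfl, e2⟩ | ⟨rfl, e2⟩ | ⟨rfl, e2⟩ | ⟨rfl, e2⟩
    · exact g5 b a e2 e1
    · have hab : a.val + 1 ≠ b.val + 1 := fun h => hne (by rw [Fin.ext (Nat.succ_injective h)])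
      obtain ⟨h1, h2⟩ := f7 _ _ hab y e1 e2
      exact f2 h1 h2
    · exact g7 a e1 e2
    · exact g4 a e1 e2
    · exact g3 a e1 e2
  · rcases key j hj with ⟨b, rfl, e2⟩ | ⟨b, rfl, e2⟩ | ⟨rfl, e2⟩ | ⟨rfl, e2⟩ | ⟨rfl, e2⟩
    · exact g6 b e2 e1
    · exact g7 b e2 e1
    · exact absurd rfl hne
    · exact f3 e1 e2
    · exact f4 e1 e2
  · rcases key j hj with ⟨b, rfl, e2⟩ | ⟨b, rfl, e2⟩ | ⟨rfl, e2⟩ | ⟨rfl, e2⟩ | ⟨rfl, e2⟩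
    · exact g1 b e2 e1
    · exact g4 b e2 e1
    · exact f3 e2 e1
    · exact absurd rfl hne
    · exact f5 e1 e2
  · rcases key j hj with ⟨b, rfl, e2⟩ | ⟨b, rfl, e2⟩ | ⟨rfl, e2⟩ | ⟨rfl, e2⟩ | ⟨rfl, e2⟩
    · exact g2 b e2 e1
    · exact g3 b e2 e1
    · exact f4 e2 e1
    · exact f5 e2 e1
    · exact absurd rfl hne

/-- Two common distinct lines determine a point up to scaling. -/
lemma cross_zero (n : ℕ) (v w : Fin 3 → ℝ) (h : 2 ≤ (Tv n v).card) (hvw : Tv n v = Tv n w) :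
    v 0 * w 2 = v 2 * w 0 ∧ v 1 * w 2 = v 2 * w 1 ∧ v 0 * w 1 = v 1 * w 0 := by
  obtain ⟨i, j, hne, hi, hj⟩ := two_lines n v h
  have hi' := hi
  have hj' := hj
  rw [hvw] at hi' hj'
  rw [FF_mem_Tv] at hi hj hi' hj'
  have hnp := FF_nonprop n i j hne
  have hj0 := FF_ne_zero n j
  simp only [FF] at hnp hj0
  generalize ca n i = a at *
  generalize cb n i = b at *
  generalize cc n i = c at *
  generalize ca n j = a' at *
  generalize cb n j = b' at *
  generalize cc n j = c' at *
  generalize v 0 = x at *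
  generalize v 1 = y at *
  generalize v 2 = z at *
  generalize w 0 = x' at *
  generalize w 1 = y' at *
  generalize w 2 = z' at *
  have hD : a * b' - a' * b ≠ 0 ∨ b * c' - b' * c ≠ 0 ∨ c * a' - c' * a ≠ 0 := by
    by_contra hcon
    push Not at hcon
    obtain ⟨h1, h2, h3⟩ := hcon
    have : a' ≠ 0 ∨ b' ≠ 0 ∨ c' ≠ 0 := by
      by_contra hc
      push Not at hc
      apply hj0
      simp [lf, hc.1, hc.2.1, hc.2.2]
    rcases this with h0 | h0 | h0
    · apply hnp (a / a')
      rw [smul_lf]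
      congr 1 <;> field_simp <;> linarith
    · apply hnp (b / b')
      rw [smul_lf]
      congr 1 <;> field_simp <;> linarith
    · apply hnp (c / c')
      rw [smul_lf]
      congr 1 <;> field_simp <;> linarith
  rcases hD with h0 | h0 | h0
  · refine ⟨?_, ?_, ?_⟩ <;> apply mul_left_cancel₀ h0 <;> grind
  · refine ⟨?_, ?_, ?_⟩ <;> apply mul_left_cancel₀ h0 <;> grind
  · refine ⟨?_, ?_, ?_⟩ <;> apply mul_left_cancel₀ h0 <;> grind

lemma pt_inj (P Q : Jx) (h0 : pt P 0 * pt Q 2 = pt P 2 * pt Q 0)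
    (h1 : pt P 1 * pt Q 2 = pt P 2 * pt Q 1) (h2 : pt P 0 * pt Q 1 = pt P 1 * pt Q 0) :
    P = Q := by
  rcases P with ⟨a, b⟩ | k <;> rcases Q with ⟨a', b'⟩ | l
  · simp [pt] at h0 h1
    rw [h0, h1]
  · exfalso
    fin_cases l <;> simp [pt] at h0 h1
  · exfalso
    have e0 : ∀ m : ℕ, ¬ ((0 : ℝ) = 2 ^ m) := fun m => (by positivity : (2 : ℝ) ^ m ≠ 0).symm
    fin_cases k <;> simp [pt, e0] at h0 h1
  · fin_cases k <;> fin_cases l <;> simp [pt] at h0 h1 h2 <;> first | rfl | norm_num at h2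

lemma pt_ne_zero (P : Jx) : pt P ≠ 0 := by
  intro h
  have h0 := congrFun h 0
  have h1 := congrFun h 1
  have h2 := congrFun h 2
  rcases P with ⟨a, b⟩ | k
  · simp [pt] at h0
  · fin_cases k <;> simp [pt] at h0 h1 h2

lemma tjurina_eq (n : ℕ) (hn : 1 ≤ n) :
    tjurina (Arr n) = ∑ P ∈ PP n, (mult n P - 1) ^ 2 := by
  have hinj : Set.InjOn (fun P => Tv n (pt P)) (PP n : Set Jx) := by
    intro P hP Q hQ hPQ
    obtain ⟨h0, h1, h2⟩ := cross_zero n (pt P) (pt Q)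
      (by rw [card_pt]; exact two_le_mult n hn P hP) hPQ
    exact pt_inj P Q h0 h1 h2
  have hn' : ∀ j, nPoints (Arr n) j =
      (((PP n).image fun P => Tv n (pt P)).filter fun T => T.card = j).card := by
    intro j
    rw [nPoints, ← Set.ncard_coe_finset]
    congr 1
    ext T
    simp only [Set.mem_ofPred_eq, Finset.coe_filter, Finset.mem_image]
    constructor
    · rintro ⟨v, hv, rfl, h2, rfl⟩
      obtain ⟨P, hP, t, ht, hvt⟩ := exists_pt n v hv h2
      refine ⟨⟨P, hP, ?_⟩, rfl⟩
      rw [← Tv_smul n (pt P) t ht, ← hvt, Tv]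
    · rintro ⟨⟨P, hP, rfl⟩, rfl⟩
      refine ⟨pt P, pt_ne_zero P, rfl, ?_, rfl⟩
      rw [card_pt]
      exact two_le_mult n hn P hP
  have hs : ∑ P ∈ PP n, (mult n P - 1) ^ 2 =
      ∑ T ∈ (PP n).image fun P => Tv n (pt P), (T.card - 1) ^ 2 := by
    rw [Finset.sum_image hinj]
    exact Finset.sum_congr rfl fun P _ => by rw [card_pt]
  rw [hs, tjurina, ← Finset.sum_fiberwise_of_maps_to (g := Finset.card)
    (t := Finset.range ((Arr n).card + 1))]
  · refine Finset.sum_congr rfl fun j _ => ?_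
    rw [hn', Finset.sum_congr rfl (g := fun _ => (j - 1) ^ 2)]
    · rw [Finset.sum_const, smul_eq_mul]
    · intro T hT
      rw [(Finset.mem_filter.1 hT).2]
  · intro T hT
    obtain ⟨P, -, rfl⟩ := Finset.mem_image.1 hT
    rw [Finset.mem_range, Nat.lt_succ_iff]
    exact Finset.card_le_card (Finset.filter_subset _ _)

lemma grid_sum (n : ℕ) (hn : 1 ≤ n) :
    ∑ p ∈ grid n, (mult n (Sum.inl p) - 1) ^ 2 = n ^ 2 + 6 * (n - 1) := by
  have h1 : ∀ p ∈ grid n, (mult n (Sum.inl p) - 1) ^ 2 =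
      1 + 3 * (if p.1 = p.2 + 1 then 1 else 0) + 3 * (if p.2 = p.1 + 1 then 1 else 0) := by
    rintro ⟨a, b⟩ hp
    simp [grid] at hp
    simp only [mult, Sum.elim_inl]
    rw [if_pos hp.1, if_pos hp.2]
    by_cases h : a = b + 1
    · rw [if_pos h, if_neg (by omega)]; norm_num
    · by_cases h' : b = a + 1
      · rw [if_neg h, if_pos h']; norm_num
      · rw [if_neg h, if_neg h']; norm_num
  have h2 : (∑ a ∈ Finset.Icc 1 n, ∑ b ∈ Finset.Icc 1 n, if a = b + 1 then 1 else 0) = n - 1 := by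
    rw [Finset.sum_comm]
    simp only [Finset.sum_ite_eq']
    rw [← Finset.card_filter]
    have : (Finset.Icc 1 n).filter (fun b => b + 1 ∈ Finset.Icc 1 n) = Finset.Icc 1 (n - 1) := by
      ext b
      simp
      omega
    rw [this]
    simp
  rw [Finset.sum_congr rfl h1, Finset.sum_add_distrib, Finset.sum_add_distrib, ← Finset.mul_sum,
    ← Finset.mul_sum, grid, Finset.sum_product, Finset.sum_product, Finset.sum_product_right, h2]
  simp only [Finset.sum_const, Nat.card_Icc, smul_eq_mul, Nat.add_sub_cancel]
  ring

lemma extra_sum (n : ℕ) (hn : 2 ≤ n) :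
    ∑ p ∈ extra n, (mult n (Sum.inl p) - 1) ^ 2 = 4 := by
  rw [extra, Finset.sum_insert (by simp; omega), Finset.sum_insert (by simp; omega),
    Finset.sum_insert (by simp), Finset.sum_singleton]
  have h1 : 1 ≤ n := by omega
  have h3 : ¬ n = n + 1 + 1 := by omega
  simp [mult, h1, h3]

lemma tjurina_Arr (n : ℕ) (hn : 2 ≤ n) : tjurina (Arr n) = 3 * n ^ 2 + 6 * n + 1 := by
  rw [tjurina_eq n (by omega), PP, Finset.sum_disjSum, Finset.sum_union, grid_sum n (by omega),
    extra_sum n hn]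
  · simp [mult, Fin.sum_univ_five]
    obtain ⟨m, rfl⟩ : ∃ m, n = m + 1 := ⟨n - 1, by omega⟩
    simp
    ring
  · rw [Finset.disjoint_left]
    rintro ⟨a, b⟩ hp hq
    simp [grid, extra] at hp hq
    omega

/-- For every integer `r ≥ 4` (equivalently, every odd degree
`d = 2r − 1 ≥ 7`), there exists a line arrangement of `2r − 1` lines in the real
projective plane which is maximal Tjurina of type `(2r − 1, r)`. -/
theorem exists_maxTjurina_odd_real (r : ℕ) (hr : 4 ≤ r) :
    ∃ A : Finset (MvPolynomial (Fin 3) ℝ),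
      IsArrangement A ∧ IsEssential A ∧ IsMaxTjurina A (2 * r - 1) r := by

  obtain ⟨n, rfl⟩ : ∃ n, r = n + 2 := ⟨r - 2, by omega⟩
  have hn : 2 ≤ n := by omega
  refine ⟨Arr n, Arr_isArr n, Arr_essential n (by omega), ?_, mdr_Arr n (by omega), ?_⟩
  · rw [Arr_card]; omega
  · rw [tjurina_Arr n hn, tauMax]
    have e1 : 2 * (n + 2) - 1 - 1 = 2 * n + 2 := by omega
    have e2 : 2 * (n + 2) - 1 - (n + 2) - 1 = n := by omega
    have e3 : 2 * (n + 2) - (2 * (n + 2) - 1) + 2 = 3 := by omega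
    rw [e1, e2, e3]
    have e4 : Nat.choose 3 2 = 3 := by decide
    rw [e4]
    symm
    apply Nat.sub_eq_of_eq_add
    ring
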